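/- Under the standing conventions, the projective dimension of L(𝔄) equals the maximum of |K_1| + ⋯ + |K_m| − m over all tuples (K_1,...,K_m) with ∅ ≠ K_i ⊆ A_i, max(K_i) ≤ min(K_j) whenever p_i < p_j, and (max K_1,...,max K_m) ∈ 𝔄. -/

import Mathlib

open MvPolynomial

/-- A minimal multigraded free resolution of an ideal `I`. -/
structure MinMGFreeRes (K : Type) [Field K] (σ : Type)
    (I : Ideal (MvPolynomial σ K)) where
  B : ℕ → Type
  finB : ∀ t, Finite (B t)
  deg : (t : ℕ) → B t → (σ →₀ ℕ)
  d : (t : ℕ) →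
    ((B (t + 1)) →₀ MvPolynomial σ K) →ₗ[MvPolynomial σ K]
      ((B t) →₀ MvPolynomial σ K)
  ε : ((B 0) →₀ MvPolynomial σ K) →ₗ[MvPolynomial σ K] MvPolynomial σ K
  bounded : ∃ N, ∀ t, N ≤ t → IsEmpty (B t)
  epi : LinearMap.range ε = I
  exact0 : LinearMap.ker ε = LinearMap.range (d 0)
  exact : ∀ t, LinearMap.ker (d t) = LinearMap.range (d (t + 1))
  graded_eps : ∀ b, ε (Finsupp.single b 1) = monomial (deg 0 b) 1
  graded_d : ∀ (t : ℕ) (b : B (t + 1)) (c : B t), ∃ k : K,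
    (d t (Finsupp.single b 1)) c = monomial (deg (t + 1) b - deg t c) k ∧
      (k ≠ 0 → deg t c ≤ deg (t + 1) b ∧ deg t c ≠ deg (t + 1) b)


namespace CoLP
open CategoryTheory CategoryTheory.Abelian

section Gen
variable {R : Type} [CommRing R] {k : Type} [AddCommGroup k] [Module R k]
  {M N P : Type} [AddCommGroup M] [Module R M] [AddCommGroup N] [Module R N]
  [AddCommGroup P] [Module R P]

/-- pullback of an Ext class along a linear map -/
noncomputable def pull (f : M →ₗ[R] N) {n : ℕ}
    (ξ : Ext (ModuleCat.of R N) (ModuleCat.of R k) n) :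
    Ext (ModuleCat.of R M) (ModuleCat.of R k) n :=
  (Ext.mk₀ (ModuleCat.ofHom f)).comp ξ (zero_add n)

lemma pull_add (f g : M →ₗ[R] N) {n : ℕ}
    (ξ : Ext (ModuleCat.of R N) (ModuleCat.of R k) n) :
    pull (f + g) ξ = pull f ξ + pull g ξ := by
  unfold pull
  rw [ModuleCat.ofHom_add, Ext.mk₀_add, Ext.add_comp]

lemma pull_comp (g : N →ₗ[R] P) (f : M →ₗ[R] N) {n : ℕ}
    (ξ : Ext (ModuleCat.of R P) (ModuleCat.of R k) n) :
    pull (g ∘ₗ f) ξ = pull f (pull g ξ) := by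
  unfold pull
  rw [ModuleCat.ofHom_comp, Ext.mk₀_comp_mk₀_assoc]

lemma pull_id {n : ℕ}
    (ξ : Ext (ModuleCat.of R N) (ModuleCat.of R k) n) :
    pull LinearMap.id ξ = ξ := by
  unfold pull
  rw [ModuleCat.ofHom_id, Ext.mk₀_id_comp]

lemma pull_zero (f : M →ₗ[R] N) {n : ℕ} :
    pull f (0 : Ext (ModuleCat.of R N) (ModuleCat.of R k) n) = 0 := by
  unfold pull
  rw [Ext.comp_zero]

lemma pull_smul (x : R) (hx : ∀ z : k, x • z = 0) (f : M →ₗ[R] N) {n : ℕ}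
    (ξ : Ext (ModuleCat.of R N) (ModuleCat.of R k) n) :
    pull (x • f) ξ = 0 := by
  have h0 : x • ξ = 0 := by
    rw [Ext.smul_eq_comp_mk₀]
    have : x • 𝟙 (ModuleCat.of R k) = 0 := by
      ext z
      exact hx z
    rw [this, Ext.mk₀_zero, Ext.comp_zero]
  unfold pull
  have : ModuleCat.ofHom (x • f) = x • ModuleCat.ofHom f := rfl
  rw [this, Ext.mk₀_smul, Ext.smul_comp, ← Ext.comp_smul, h0, Ext.comp_zero]

variable (R k M) in
/-- vanishing of `Ext^n(M, k)` -/
def EZ (n : ℕ) : Prop := ∀ ξ : Ext (ModuleCat.of R M) (ModuleCat.of R k) n, ξ = 0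

variable (R M) in
/-- projective dimension less than n -/
def PD (n : ℕ) : Prop := HasProjectiveDimensionLT (ModuleCat.of R M) n

lemma PD.mono {a b : ℕ} (h : PD R M a) (hab : a ≤ b) : PD R M b := by
  have : HasProjectiveDimensionLT (ModuleCat.of R M) a := h
  exact hasProjectiveDimensionLT_of_ge _ a b hab

lemma PD.ez {a b : ℕ} (h : PD R M a) (hab : a ≤ b) : EZ R k M b := by
  have : HasProjectiveDimensionLT (ModuleCat.of R M) a := h
  intro ξ
  exact ξ.eq_zero_of_hasProjectiveDimensionLT a hab

lemma PD.equiv {a : ℕ} (h : PD R M a) (e : M ≃ₗ[R] N) : PD R N a := by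
  have : HasProjectiveDimensionLT (ModuleCat.of R M) a := h
  exact hasProjectiveDimensionLT_of_iso e.toModuleIso a

lemma PD.of_projective [Module.Projective R M] : PD R M 1 := by
  have : Projective (ModuleCat.of R M) := inferInstance
  unfold PD
  infer_instance

lemma PD.projective (h : PD R M 1) : Module.Projective R M := by
  have : HasProjectiveDimensionLT (ModuleCat.of R M) 1 := h
  have : Projective (ModuleCat.of R M) := inferInstance
  exact (IsProjective.iff_projective M).2 this

lemma PD.of_subsingleton [Subsingleton M] : PD R M 0 := by
  unfold PD
  rw [hasProjectiveDimensionLT_zero_iff_isZero]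
  exact ModuleCat.isZero_of_subsingleton _

lemma EZ.equiv {a : ℕ} (h : EZ R k M a) (e : M ≃ₗ[R] N) : EZ R k N a := by
  intro ξ
  have := h (pull (e : M →ₗ[R] N) ξ)
  rw [← pull_id ξ]
  have h2 : (LinearMap.id : N →ₗ[R] N) = (e : M →ₗ[R] N) ∘ₗ (e.symm : N →ₗ[R] M) := by
    ext; simp
  rw [h2, pull_comp, this, pull_zero]

section SES
variable (f : M →ₗ[R] N) (g : N →ₗ[R] P) (hf : Function.Injective f)
  (hfg : Function.Exact f g) (hg : Function.Surjective g)
include hf hfg hg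

lemma ses : (ShortComplex.mk (ModuleCat.ofHom f) (ModuleCat.ofHom g)
    (by rw [← ModuleCat.ofHom_comp, hfg.linearMap_comp_eq_zero]; rfl)).ShortExact :=
  ModuleCat.shortComplex_shortExact _ hfg hf hg

lemma PD.X3 {n : ℕ} (h1 : PD R M n) (h2 : PD R N (n+1)) : PD R P (n+1) :=
  (ses f g hf hfg hg).hasProjectiveDimensionLT_X₃ n h1 h2

lemma PD.X2 {n : ℕ} (h1 : PD R M n) (h2 : PD R P n) : PD R N n :=
  (ses f g hf hfg hg).hasProjectiveDimensionLT_X₂ n h1 h2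

lemma PD.X1 {n : ℕ} (h1 : PD R N n) (h2 : PD R P (n+1)) : PD R M n :=
  (ses f g hf hfg hg).hasProjectiveDimensionLT_X₁ n h1 h2

lemma EZ.X2 {n : ℕ} (h1 : EZ R k M n) (h2 : EZ R k P n) : EZ R k N n := by
  intro ξ
  obtain ⟨x, hx⟩ := Ext.contravariant_sequence_exact₂ (ses f g hf hfg hg) _ ξ (h1 _)
  rw [← hx, h2 x, Ext.comp_zero]

lemma EZ.X1 {n : ℕ} (h1 : ∀ ξ : Ext (ModuleCat.of R N) (ModuleCat.of R k) n, pull f ξ = 0)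
    (h2 : EZ R k P (n+1)) : EZ R k M n := by
  intro ξ
  obtain ⟨x, hx⟩ := Ext.contravariant_sequence_exact₁ (ses f g hf hfg hg) _ ξ (add_comm 1 n) (h2 _)
  rw [← hx]
  exact h1 x

end SES

lemma PD.prod {n : ℕ} (h1 : PD R M n) (h2 : PD R N n) : PD R (M × N) n :=
  PD.X2 (LinearMap.inl R M N) (LinearMap.snd R M N) LinearMap.inl_injective
    Function.Exact.inl_snd LinearMap.snd_surjective h1 h2

lemma EZ.fst {n : ℕ} (h : EZ R k (M × N) n) : EZ R k M n := by
  intro ξ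
  have h2 : (LinearMap.id : M →ₗ[R] M) = (LinearMap.fst R M N) ∘ₗ (LinearMap.inl R M N) := by
    ext; simp
  rw [← pull_id ξ, h2, pull_comp, h (pull _ ξ), pull_zero]

lemma pull_prod {f : P →ₗ[R] M} {g : P →ₗ[R] N} {n : ℕ}
    (ξ : Ext (ModuleCat.of R (M × N)) (ModuleCat.of R k) n)
    (h1 : ∀ ξ : Ext (ModuleCat.of R M) (ModuleCat.of R k) n, pull f ξ = 0)
    (h2 : ∀ ξ : Ext (ModuleCat.of R N) (ModuleCat.of R k) n, pull g ξ = 0) :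
    pull (f.prod g) ξ = 0 := by
  have : f.prod g = (LinearMap.inl R M N) ∘ₗ f + (LinearMap.inr R M N) ∘ₗ g := by
    ext <;> simp
  rw [this, pull_add, pull_comp, pull_comp, h1, h2, add_zero]

end Gen

section Mon
variable {K : Type} [Field K] {σ : Type}

/-- multiplication by `x` as a map between ideals -/
noncomputable def mulMap {R : Type} [CommRing R] (x : R) (I J : Ideal R)
    (h : ∀ z ∈ I, x * z ∈ J) : I →ₗ[R] J :=
  LinearMap.codRestrict J (x • I.subtype) (fun z => h z.1 z.2)

@[simp] lemma mulMap_coe {R : Type} [CommRing R] (x : R) (I J : Ideal R)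
    (h : ∀ z ∈ I, x * z ∈ J) (z : I) : (mulMap x I J h z : R) = x * z := rfl

/-- the inclusion of ideals -/
noncomputable def incl {R : Type} [CommRing R] (I J : Ideal R)
    (h : ∀ z ∈ I, z ∈ J) : I →ₗ[R] J :=
  LinearMap.codRestrict J I.subtype (fun z => h z.1 z.2)

@[simp] lemma incl_coe {R : Type} [CommRing R] (I J : Ideal R)
    (h : ∀ z ∈ I, z ∈ J) (z : I) : (incl I J h z : R) = z := rfl

variable (K) in
/-- monomial ideal generated by a set of exponents -/
noncomputable def mI (U : Set (σ →₀ ℕ)) : Ideal (MvPolynomial σ K) :=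
  Ideal.span ((fun s => monomial s (1 : K)) '' U)

lemma mem_mI {U : Set (σ →₀ ℕ)} {p : MvPolynomial σ K} :
    p ∈ mI K U ↔ ∀ e ∈ p.support, ∃ u ∈ U, u ≤ e := mem_ideal_span_monomial_image

lemma mI_mono {U V : Set (σ →₀ ℕ)} (h : U ⊆ V) : mI K U ≤ mI K V :=
  Ideal.span_mono (Set.image_mono h)

/-- generators of the sum of `y_k J_k` -/
def Gs (y : ℕ → σ) (U : ℕ → Set (σ →₀ ℕ)) (s : ℕ) : Set (σ →₀ ℕ) :=
  {e | ∃ k < s, ∃ u ∈ U k, e = u + Finsupp.single (y k) 1}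

lemma mI_Gs_succ (y : ℕ → σ) (U : ℕ → Set (σ →₀ ℕ)) (s : ℕ) :
    mI K (Gs y U (s + 1)) = mI K (Gs y U s) ⊔ Ideal.span {X (y s)} * mI K (U s) := by
  unfold mI
  rw [Ideal.span_mul_span', ← Ideal.span_union]
  congr 1
  ext p
  simp only [Set.mem_image, Set.mem_union, Set.singleton_mul, Gs, Set.mem_ofPred_eq]
  constructor
  · rintro ⟨_, ⟨k, hk, u, hu, rfl⟩, rfl⟩
    rcases Nat.lt_succ_iff_lt_or_eq.1 hk with h | rfl
    · exact Or.inl ⟨_, ⟨k, h, u, hu, rfl⟩, rfl⟩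
    · refine Or.inr ⟨_, ⟨u, hu, rfl⟩, ?_⟩
      rw [X, monomial_mul, one_mul, add_comm]
  · rintro (⟨_, ⟨k, hk, u, hu, rfl⟩, rfl⟩ | ⟨_, ⟨u, hu, rfl⟩, rfl⟩)
    · exact ⟨_, ⟨k, by omega, u, hu, rfl⟩, rfl⟩
    · refine ⟨_, ⟨s, by omega, u, hu, rfl⟩, ?_⟩
      rw [X, monomial_mul, one_mul, add_comm]

lemma mI_Gs_zero (y : ℕ → σ) (U : ℕ → Set (σ →₀ ℕ)) : mI K (Gs y U 0) = ⊥ := by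
  unfold mI
  rw [Ideal.span_eq_bot]
  rintro x ⟨_, ⟨k, hk, _⟩, _⟩
  omega

lemma mI_Gs_one (y : ℕ → σ) (U : ℕ → Set (σ →₀ ℕ)) :
    mI K (Gs y U 1) = Ideal.span {X (y 0)} * mI K (U 0) := by
  rw [mI_Gs_succ, mI_Gs_zero, bot_sup_eq]

lemma X_mul_mem_Gs_one (y : ℕ → σ) (U : ℕ → Set (σ →₀ ℕ)) :
    ∀ z ∈ mI K (U 0), X (y 0) * z ∈ mI K (Gs y U 1) := by
  intro z hz
  rw [mI_Gs_one]
  exact Ideal.mul_mem_mul (Ideal.mem_span_singleton_self _) hz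

lemma bij_one (y : ℕ → σ) (U : ℕ → Set (σ →₀ ℕ)) :
    Function.Bijective (mulMap (X (y 0)) (mI K (U 0)) (mI K (Gs y U 1))
      (X_mul_mem_Gs_one y U)) := by
  constructor
  · intro a b hab
    have := congrArg Subtype.val hab
    simp only [mulMap_coe] at this
    exact Subtype.ext (mul_left_cancel₀ (X_ne_zero _) this)
  · rintro ⟨w, hw⟩
    have hw' := hw
    rw [mI_Gs_one, Ideal.mem_span_singleton_mul] at hw'
    obtain ⟨z, hz, h⟩ := hw'
    exact ⟨⟨z, hz⟩, Subtype.ext h⟩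

/-- the isomorphism `J ≅ x J` -/
noncomputable def equiv_one (y : ℕ → σ) (U : ℕ → Set (σ →₀ ℕ)) :
    mI K (U 0) ≃ₗ[MvPolynomial σ K] mI K (Gs y U 1) :=
  LinearEquiv.ofBijective _ (bij_one y U)

/-- the colon computation -/
lemma colon (y : ℕ → σ) (U : ℕ → Set (σ →₀ ℕ)) (s : ℕ) (hy : ∀ k < s, y k ≠ y s)
    (hU : ∀ k < s, ∀ u ∈ U s, u (y k) = 0) (b : MvPolynomial σ K) (hb : b ∈ mI K (U s))
    (hxb : X (y s) * b ∈ mI K (Gs y U s)) : b ∈ mI K (Gs y (fun _ => U s) s) := by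
  rw [mem_mI] at hb hxb ⊢
  intro e he
  obtain ⟨u, hu, hue⟩ := hb e he
  have : Finsupp.single (y s) 1 + e ∈ (X (y s) * b).support := by
    rw [mem_support_iff] at he ⊢
    rw [add_comm, mul_comm, coeff_mul_X]
    exact he
  obtain ⟨_, ⟨k, hk, v, hv, rfl⟩, hle⟩ := hxb _ this
  refine ⟨_, ⟨k, hk, u, hu, rfl⟩, ?_⟩
  intro i
  by_cases hi : i = y k
  · subst hi
    have h1 := hle (y k)
    simp [(hy k hk).symm] at h1
    simp [hU k hk u hu]
    omega
  · simpa [Finsupp.single_apply, Ne.symm hi] using hue i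

variable {k : Type} [AddCommGroup k] [Module (MvPolynomial σ K) k]

variable (k) in
/-- projective dimension exactly `d`, detected by `k` -/
def QQ (I : Ideal (MvPolynomial σ K)) (d : ℕ) : Prop :=
  PD (MvPolynomial σ K) I (d + 1) ∧ ¬ EZ (MvPolynomial σ K) k I d

theorem chain (hk : ∀ (v : σ) (z : k), (X v : MvPolynomial σ K) • z = 0) (y : ℕ → σ)
    (s : ℕ) (hs : 1 ≤ s) : ∀ (U : ℕ → Set (σ →₀ ℕ)) (d : ℕ → ℕ)
    (_ : ∀ i < s, ∀ j < s, y i = y j → i = j)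
    (_ : ∀ i < s, ∀ j < s, ∀ u ∈ U j, u (y i) = 0)
    (_ : ∀ i < s, ∀ j < s, i ≤ j → U j ⊆ U i)
    (_ : ∀ i < s, QQ k (mI K (U i)) (d i)),
    QQ k (mI K (Gs y U s)) ((Finset.range s).sup (fun i => d i + i)) := by
  induction s, hs using Nat.le_induction with
  | base =>
    intro U d _ _ _ h
    obtain ⟨h1, h2⟩ := h 0 (by omega)
    have : (Finset.range 1).sup (fun i => d i + i) = d 0 := by simp
    rw [this]
    refine ⟨h1.equiv (equiv_one y U), fun h3 => h2 (h3.equiv (equiv_one y U).symm)⟩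
  | succ s hs ih =>
    intro U d hy hU hanti h
    have ih1 := ih U d (fun i hi j hj => hy i (by omega) j (by omega))
      (fun i hi j hj => hU i (by omega) j (by omega))
      (fun i hi j hj => hanti i (by omega) j (by omega)) (fun i hi => h i (by omega))
    have ih2 := ih (fun _ => U s) (fun _ => d s) (fun i hi j hj => hy i (by omega) j (by omega))
      (fun i hi j hj => hU i (by omega) s (by omega))
      (fun i hi j hj _ => subset_rfl) (fun i hi => h s (by omega))
    have hsup : (Finset.range s).sup (fun i => d s + i) = d s + s - 1 := by
      apply le_antisymm
      · apply Finset.sup_le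
        intro b hb
        simp at hb
        omega
      · have := Finset.le_sup (f := fun i => d s + i) (Finset.mem_range.2 (show s - 1 < s by omega))
        omega
    rw [hsup] at ih2
    rw [Finset.range_add_one, Finset.sup_insert]
    set N1 := (Finset.range s).sup (fun i => d i + i) with hN1
    obtain ⟨hJ1, hJ2⟩ := h s (by omega)
    obtain ⟨hA1, hA2⟩ := ih2
    obtain ⟨hB1, hB2⟩ := ih1
    set A := mI K (Gs y (fun _ => U s) s) with hA
    set B := mI K (Gs y U s) with hB
    set J := mI K (U s) with hJ
    set C := mI K (Gs y U (s + 1)) with hC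
    have hAB : A ≤ B := by
      apply mI_mono
      rintro _ ⟨i, hi, u, hu, rfl⟩
      exact ⟨i, hi, u, hanti i (by omega) s (by omega) (by omega) hu, rfl⟩
    have hAJ : A ≤ J := by
      intro p hp
      rw [hA, mem_mI] at hp
      rw [hJ, mem_mI]
      intro e he
      obtain ⟨_, ⟨i, hi, u, hu, rfl⟩, hle⟩ := hp e he
      exact ⟨u, hu, le_trans le_self_add hle⟩
    have hCeq : C = B ⊔ Ideal.span {X (y s)} * J := mI_Gs_succ y U s
    have hBC : B ≤ C := by rw [hCeq]; exact le_sup_left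
    have hJC : ∀ z ∈ J, X (y s) * z ∈ C := by
      intro z hz
      rw [hCeq]
      exact Ideal.mem_sup_right (Ideal.mul_mem_mul (Ideal.mem_span_singleton_self _) hz)
    let fB : A →ₗ[MvPolynomial σ K] B := (X (y s) : MvPolynomial σ K) • incl A B hAB
    let fJ : A →ₗ[MvPolynomial σ K] J := incl A J hAJ
    let f := fB.prod fJ
    let g : (B × J) →ₗ[MvPolynomial σ K] C := (incl B C hBC).coprod (-(mulMap (X (y s)) J C hJC))
    have hf : Function.Injective f := by
      intro a b hab
      have := congrArg (fun t => (t.2 : MvPolynomial σ K)) hab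
      exact Subtype.ext this
    have hg : Function.Surjective g := by
      rintro ⟨c, hc⟩
      have hc' := hc
      rw [hCeq, Submodule.mem_sup] at hc'
      obtain ⟨b, hb, w, hw, rfl⟩ := hc'
      rw [Ideal.mem_span_singleton_mul] at hw
      obtain ⟨z, hz, rfl⟩ := hw
      refine ⟨(⟨b, hb⟩, -⟨z, hz⟩), Subtype.ext ?_⟩
      simp [g]
    have hfg : Function.Exact f g := by
      rintro ⟨b, z⟩
      constructor
      · intro h0
        have h1 := congrArg Subtype.val h0
        simp [g] at h1
        have h2 : (b : MvPolynomial σ K) = X (y s) * (z : MvPolynomial σ K) := by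
          linear_combination h1
        have hz : (z : MvPolynomial σ K) ∈ A := by
          apply colon (K := K) y U s (fun i hi e => by have := hy i (by omega) s (by omega) e; omega)
            (fun i hi => hU i (by omega) s (by omega)) z z.2
          rw [← h2]
          exact b.2
        refine ⟨⟨z, hz⟩, ?_⟩
        refine Prod.ext (Subtype.ext ?_) (Subtype.ext ?_)
        · simp [f, fB, h2]
        · simp [f, fJ]
      · rintro ⟨a, ha⟩
        rw [← ha]
        refine Subtype.ext ?_
        simp [f, g, fB, fJ]
    have hds : d s + s - 1 + 1 = d s + s := by omega
    rw [hds] at hA1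
    constructor
    · refine PD.X3 f g hf hfg hg (hA1.mono le_sup_left) (PD.prod ?_ ?_)
      · exact hB1.mono (by have := le_sup_right (a := d s + s) (b := N1); omega)
      · exact hJ1.mono (by have := le_sup_left (a := d s + s) (b := N1); omega)
    · intro hE
      rcases le_total (d s + s) N1 with hle | hle
      · rw [sup_eq_right.2 hle] at hE
        have := EZ.X2 f g hf hfg hg (hA1.ez hle) hE
        exact hB2 this.fst
      · rw [sup_eq_left.2 hle, ← hds] at hE
        refine hA2 (EZ.X1 f g hf hfg hg (fun ξ => ?_) hE)
        refine pull_prod ξ (fun α => pull_smul _ (hk _) _ _) ?_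
        rcases Nat.lt_or_ge 1 s with h1 | h1
        · intro β
          have : β = 0 := hJ1.ez (k := k) (by omega) β
          rw [this, pull_zero]
        · obtain rfl : s = 1 := by omega
          intro β
          let e := equiv_one (K := K) y (fun _ => U 1)
          have : fJ = ((X (y 0) : MvPolynomial σ K) • LinearMap.id) ∘ₗ e.symm.toLinearMap := by
            apply LinearMap.ext
            intro a
            obtain ⟨a, rfl⟩ := e.surjective a
            refine Subtype.ext ?_
            simp [fJ]
            rfl
          rw [this, pull_comp, pull_smul _ (hk _), pull_zero]
end Mon

section Rec
variable {K : Type} [Field K] {σ : Type}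

/-- exponent vector of the monomial of `f` -/
noncomputable def expo {m n : ℕ} (x : Fin m → Fin n → σ) (f : Fin m → Fin n) : σ →₀ ℕ :=
  ∑ i, Finsupp.single (x i (f i)) 1

/-- the exchange property -/
def Good {m n : ℕ} (F : Set (Fin m → Fin n)) : Prop :=
  ∀ f ∈ F, ∀ g ∈ F, ∀ i, (∀ j < i, f j = g j) → g i < f i → Function.update f i (g i) ∈ F

/-- sizes of admissible tuples -/
def TT {m n : ℕ} (F : Set (Fin m → Fin n)) : Set ℕ :=
  {t | ∃ Kf : Fin m → Finset (Fin n), (∀ i, (Kf i).Nonempty) ∧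
    (∀ f : Fin m → Fin n, (∀ i, f i ∈ Kf i) → f ∈ F) ∧ (∑ i, (Kf i).card) = m + t}

/-- slices -/
def slice {m n : ℕ} (F : Set (Fin (m + 1) → Fin n)) (a : Fin n) : Set (Fin m → Fin n) :=
  {f | (Fin.cons a f : Fin (m + 1) → Fin n) ∈ F}

lemma exists_enum {n : ℕ} (D : Finset (Fin n)) (hD : D.Nonempty) :
    ∃ a : ℕ → Fin n, (∀ i < D.card, ∀ j < D.card, i < j → a i < a j) ∧
      (∀ i < D.card, a i ∈ D) ∧ ∀ v ∈ D, ∃ i < D.card, a i = v := by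
  obtain ⟨v0, -⟩ := hD
  refine ⟨fun i => if h : i < D.card then D.orderEmbOfFin rfl ⟨i, h⟩ else v0, ?_, ?_, ?_⟩
  · intro i hi j hj hij
    simp only [hi, hj, dif_pos]
    exact (D.orderEmbOfFin rfl).strictMono hij
  · intro i hi
    simp only [hi, dif_pos]
    exact D.orderEmbOfFin_mem rfl _
  · intro v hv
    have : v ∈ Set.range (D.orderEmbOfFin rfl) := by
      rw [Finset.range_orderEmbOfFin]; exact hv
    obtain ⟨⟨i, hi⟩, rfl⟩ := this
    exact ⟨i, hi, by simp [hi]⟩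

lemma Good.slice {m n : ℕ} {F : Set (Fin (m + 1) → Fin n)} (h : Good F) (a : Fin n) :
    Good (slice F a) := by
  intro f hf g hg i hag hlt
  have := h _ hf _ hg i.succ (by
    intro j
    refine Fin.cases ?_ (fun j => ?_) j
    · intro; simp
    · intro hj
      simp only [Fin.cons_succ]
      exact hag j (by simpa using hj)) (by simpa using hlt)
  rw [Fin.cons_succ, ← Fin.cons_update] at this
  exact this

lemma Good.anti {m n : ℕ} {F : Set (Fin (m + 1) → Fin n)} (h : Good F) (a b : Fin n)
    (hab : a < b) (ha : (CoLP.slice F a).Nonempty) : CoLP.slice F b ⊆ CoLP.slice F a := by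
  obtain ⟨g, hg⟩ := ha
  intro f hf
  have := h _ hf _ hg 0 (by intro j hj; simp at hj) (by simpa using hab)
  rw [Fin.cons_zero, Fin.update_cons_zero] at this
  exact this

lemma expo_cons {m n : ℕ} (x : Fin (m + 1) → Fin n → σ) (a : Fin n) (f : Fin m → Fin n) :
    expo x (Fin.cons a f) = expo (fun i => x i.succ) f + Finsupp.single (x 0 a) 1 := by
  unfold expo
  rw [Fin.sum_univ_succ, add_comm]
  simp

variable {k : Type} [AddCommGroup k] [Module (MvPolynomial σ K) k]

lemma QQ_top [Nontrivial k] : QQ k (⊤ : Ideal (MvPolynomial σ K)) 0 := by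
  constructor
  · exact (PD.of_projective (M := MvPolynomial σ K)).equiv (Submodule.topEquiv).symm
  · intro h
    have h' : EZ (MvPolynomial σ K) k (MvPolynomial σ K) 0 := h.equiv Submodule.topEquiv
    obtain ⟨z, hz⟩ := exists_ne (0 : k)
    have h0 := h' (Ext.mk₀ (ModuleCat.ofHom (LinearMap.toSpanSingleton (MvPolynomial σ K) k z)))
    rw [Ext.mk₀_eq_zero_iff] at h0
    apply hz
    have h1 := congrArg (fun t => t.hom (1 : MvPolynomial σ K)) h0
    simpa using h1

theorem main_rec [Nontrivial k] (hk : ∀ (v : σ) (z : k), (X v : MvPolynomial σ K) • z = 0)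
    (n : ℕ) : ∀ (m : ℕ) (x : Fin m → Fin n → σ)
    (_ : ∀ i j a b, x i a = x j b → i = j ∧ a = b) (F : Set (Fin m → Fin n))
    (_ : F.Nonempty) (_ : Good F), ∃ N, IsGreatest (TT F) N ∧ QQ k (mI K (expo x '' F)) N := by
  intro m
  induction m with
  | zero =>
    intro x _ F hne _
    obtain ⟨f0, hf0⟩ := hne
    have hall : ∀ f : Fin 0 → Fin n, f ∈ F := fun f => by rwa [Subsingleton.elim f f0]
    refine ⟨0, ⟨⟨fun _ => ∅, fun i => i.elim0, fun f _ => hall f, by simp⟩, ?_⟩, ?_⟩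
    · rintro t ⟨Kf, _, _, h⟩
      simp at h
      omega
    · have : mI K (expo x '' F) = ⊤ := by
        rw [Ideal.eq_top_iff_one]
        apply Ideal.subset_span
        exact ⟨0, ⟨f0, hf0, by simp [expo]⟩, rfl⟩
      rw [this]
      exact QQ_top
  | succ m ih =>
    intro x hx F hne hgood
    classical
    let D : Finset (Fin n) := Finset.univ.filter (fun a => (slice F a).Nonempty)
    have hDmem : ∀ a, a ∈ D ↔ (slice F a).Nonempty := by intro a; simp [D]
    have hF : ∀ f ∈ F, Fin.tail f ∈ slice F (f 0) := by
      intro f hf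
      change (Fin.cons (f 0) (Fin.tail f) : Fin (m + 1) → Fin n) ∈ F
      rwa [Fin.cons_self_tail]
    have hD : D.Nonempty := by
      obtain ⟨f, hf⟩ := hne
      exact ⟨f 0, (hDmem _).2 ⟨_, hF f hf⟩⟩
    obtain ⟨a, ha1, ha2, ha3⟩ := exists_enum D hD
    set s := D.card with hs
    have hs1 : 1 ≤ s := Finset.card_pos.2 hD
    have hainj : ∀ i < s, ∀ j < s, a i = a j → i = j := by
      intro i hi j hj h
      rcases lt_trichotomy i j with h1 | h1 | h1
      · exact absurd h (ha1 i hi j hj h1).ne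
      · exact h1
      · exact absurd h (ha1 j hj i hi h1).ne'
    have hx' : ∀ i j a b, x (Fin.succ i) a = x (Fin.succ j) b → i = j ∧ a = b := by
      intro i j a b h
      obtain ⟨h1, h2⟩ := hx _ _ _ _ h
      exact ⟨Fin.succ_injective _ h1, h2⟩
    have IH : ∀ i, ∃ N, i < s → IsGreatest (TT (slice F (a i))) N ∧
        QQ k (mI K (expo (fun i => x i.succ) '' (slice F (a i)))) N := by
      intro i
      by_cases hi : i < s
      · obtain ⟨N, hN⟩ := ih (fun i => x i.succ) hx' (slice F (a i)) ((hDmem _).1 (ha2 i hi))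
          (hgood.slice _)
        exact ⟨N, fun _ => hN⟩
      · exact ⟨0, fun h => absurd h hi⟩
    choose d hd using IH
    have hanti : ∀ i < s, ∀ j < s, i ≤ j → slice F (a j) ⊆ slice F (a i) := by
      intro i hi j hj hij
      rcases hij.eq_or_lt with rfl | hlt
      · exact subset_rfl
      · exact hgood.anti _ _ (ha1 i hi j hj hlt) ((hDmem _).1 (ha2 i hi))
    refine ⟨(Finset.range s).sup (fun i => d i + i), ⟨?_, ?_⟩, ?_⟩
    · obtain ⟨i, hi, hsup⟩ := Finset.exists_mem_eq_sup (Finset.range s)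
        (Finset.nonempty_range_iff.2 (by omega)) (fun i => d i + i)
      rw [hsup]
      have hi := Finset.mem_range.1 hi
      obtain ⟨K', h1, h2, h3⟩ := (hd i hi).1.1
      refine ⟨Fin.cons ((Finset.range (i + 1)).image a) K', ?_, ?_, ?_⟩
      · intro j
        refine Fin.cases ?_ (fun j => ?_) j
        · simp
        · simpa using h1 j
      · intro f hf
        have h0 := hf 0
        rw [Fin.cons_zero, Finset.mem_image] at h0
        obtain ⟨l, hl, hl2⟩ := h0
        have hl := Finset.mem_range.1 hl
        have ht : Fin.tail f ∈ slice F (a i) := h2 _ (fun j => by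
          have := hf j.succ
          rwa [Fin.cons_succ] at this)
        have := hanti l (by omega) i hi (by omega) ht
        rw [hl2] at this
        have h4 : (Fin.cons (f 0) (Fin.tail f) : Fin (m + 1) → Fin n) ∈ F := this
        rwa [Fin.cons_self_tail] at h4
      · rw [Fin.sum_univ_succ]
        simp only [Fin.cons_zero, Fin.cons_succ]
        rw [h3, Finset.card_image_of_injOn, Finset.card_range]
        · omega
        · intro p hp q hq
          simp at hp hq
          exact hainj p (by omega) q (by omega)
    · rintro t ⟨Kf, h1, h2, h3⟩
      have hKD : ∀ v ∈ Kf 0, v ∈ D := by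
        intro v hv
        choose c hc using h1
        rw [hDmem]
        refine ⟨fun i => c i.succ, h2 _ (fun i => ?_)⟩
        refine Fin.cases ?_ (fun j => ?_) i
        · simpa using hv
        · simpa using hc j.succ
      obtain ⟨i, hi, hiv⟩ := ha3 _ (hKD _ ((Kf 0).max'_mem (h1 0)))
      have hsub : Kf 0 ⊆ (Finset.range (i + 1)).image a := by
        intro w hw
        obtain ⟨l, hl, rfl⟩ := ha3 _ (hKD w hw)
        refine Finset.mem_image_of_mem _ (Finset.mem_range.2 ?_)
        by_contra hcon
        have h4 := ha1 i hi l hl (by omega)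
        have h5 := (Kf 0).le_max' _ hw
        rw [← hiv] at h5
        exact absurd h5 (not_le.2 h4)
      have hcard : (Kf 0).card ≤ i + 1 := by
        have h4 := Finset.card_le_card hsub
        have h5 := Finset.card_image_le (s := Finset.range (i + 1)) (f := a)
        rw [Finset.card_range] at h5
        omega
      have hge : m ≤ ∑ j : Fin m, (Kf j.succ).card := by
        have : ∑ j : Fin m, 1 ≤ ∑ j : Fin m, (Kf j.succ).card :=
          Finset.sum_le_sum (fun j _ => Finset.card_pos.2 (h1 _))
        simpa using this
      have hmem : (∑ j : Fin m, (Kf j.succ).card) - m ∈ TT (slice F (a i)) := by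
        refine ⟨fun j => Kf j.succ, fun j => h1 _, ?_, (Nat.add_sub_cancel' hge).symm⟩
        intro f hf
        refine h2 _ (fun j => ?_)
        refine Fin.cases ?_ (fun j => ?_) j
        · rw [Fin.cons_zero, hiv]
          exact (Kf 0).max'_mem (h1 0)
        · simpa using hf j
      have h6 := (hd i hi).1.2 hmem
      have h7 := Finset.le_sup (f := fun i => d i + i) (Finset.mem_range.2 hi)
      rw [Fin.sum_univ_succ] at h3
      omega
    · have hch := chain hk (fun i => x 0 (a i)) s hs1
        (fun i => expo (fun i => x i.succ) '' (slice F (a i))) d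
        (fun i hi j hj h => hainj i hi j hj (hx _ _ _ _ h).2)
        (by
          rintro i hi j hj _ ⟨f, hf, rfl⟩
          unfold expo
          rw [Finsupp.finsetSum_apply]
          apply Finset.sum_eq_zero
          intro l _
          rw [Finsupp.single_apply, if_neg]
          intro h
          exact Fin.succ_ne_zero _ (hx _ _ _ _ h).1)
        (fun i hi j hj hij => Set.image_mono (hanti i hi j hj hij))
        (fun i hi => (hd i hi).2)
      convert hch using 2
      ext e
      constructor
      · rintro ⟨f, hf, rfl⟩
        have h1 := hF f hf
        obtain ⟨i, hi, hia⟩ := ha3 (f 0) ((hDmem _).2 ⟨_, h1⟩)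
        refine ⟨i, hi, _, ⟨Fin.tail f, by rwa [hia], rfl⟩, ?_⟩
        rw [← expo_cons, hia, Fin.cons_self_tail]
      · rintro ⟨i, hi, _, ⟨f, hf, rfl⟩, rfl⟩
        refine ⟨Fin.cons (a i) f, hf, ?_⟩
        rw [expo_cons]
end Rec

section Resol
variable {K : Type} [Field K] {σ : Type}

/-- all coefficients in the irrelevant maximal ideal -/
def inM {ι : Type} (w : ι →₀ MvPolynomial σ K) : Prop := ∀ c, constantCoeff (w c) = 0

lemma inM_map {ι κ : Type} (L : (ι →₀ MvPolynomial σ K) →ₗ[MvPolynomial σ K]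
    (κ →₀ MvPolynomial σ K)) {w : ι →₀ MvPolynomial σ K} (hw : inM w) : inM (L w) := by
  intro c
  have : w = w.sum (fun i r => r • Finsupp.single i 1) := by
    conv_lhs => rw [← Finsupp.sum_single w]
    simp
  rw [this, map_finsuppSum, Finsupp.sum, Finsupp.finsetSum_apply, map_sum]
  apply Finset.sum_eq_zero
  intro i _
  rw [map_smul, Finsupp.smul_apply, smul_eq_mul, map_mul, hw i, zero_mul]

variable {I : Ideal (MvPolynomial σ K)} (Res : MinMGFreeRes K σ I)

lemma minimal (t : ℕ) (w : Res.B (t + 1) →₀ MvPolynomial σ K) : inM (Res.d t w) := by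
  classical
  intro c
  have : w = w.sum (fun i r => r • Finsupp.single i 1) := by
    conv_lhs => rw [← Finsupp.sum_single w]
    simp
  rw [this, map_finsuppSum, Finsupp.sum, Finsupp.finsetSum_apply, map_sum]
  apply Finset.sum_eq_zero
  intro b _
  rw [map_smul, Finsupp.smul_apply, smul_eq_mul, map_mul]
  obtain ⟨a, ha, ha2⟩ := Res.graded_d t b c
  rw [ha]
  by_cases h0 : a = 0
  · simp [h0]
  · obtain ⟨h1, h2⟩ := ha2 h0
    have : Res.deg (t + 1) b - Res.deg t c ≠ 0 := by
      intro h
      exact h2 (le_antisymm h1 (tsub_eq_zero_iff_le.1 h))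
    rw [constantCoeff_monomial, if_neg this, mul_zero]

lemma split_empty (t : ℕ) {M : Type} [AddCommGroup M] [Module (MvPolynomial σ K) M]
    [Module.Projective (MvPolynomial σ K) M]
    (φ : (Res.B t →₀ MvPolynomial σ K) →ₗ[MvPolynomial σ K] M) (hφ : Function.Surjective φ)
    (hker : LinearMap.ker φ = LinearMap.range (Res.d t)) : IsEmpty (Res.B (t + 1)) := by
  constructor
  intro b
  obtain ⟨s, hs⟩ := Module.projective_lifting_property φ LinearMap.id hφ
  have hs' : ∀ z, φ (s z) = z := fun z => by
    have := congrArg (fun L => L z) hs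
    simpa using this
  have hρ : ∀ w, ∃ v, Res.d t v = w - s (φ w) := by
    intro w
    have : w - s (φ w) ∈ LinearMap.ker φ := by
      rw [LinearMap.mem_ker, map_sub, hs', sub_self]
    rw [hker] at this
    exact this
  let ρ : (Res.B t →₀ MvPolynomial σ K) →ₗ[MvPolynomial σ K] LinearMap.range (Res.d t) :=
    LinearMap.codRestrict _ (LinearMap.id - s ∘ₗ φ) (fun w => hρ w)
  obtain ⟨ψ, hψ⟩ := Module.projective_lifting_property (Res.d t).rangeRestrict ρ
    (LinearMap.surjective_rangeRestrict _)
  have hψ' : ∀ w, Res.d t (ψ w) = w - s (φ w) := fun w => by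
    have := congrArg (fun L => (L w : Res.B t →₀ MvPolynomial σ K)) hψ
    exact this
  set z := Res.d t (Finsupp.single b 1) with hz
  have hz0 : φ z = 0 := by
    rw [← LinearMap.mem_ker, hker]
    exact ⟨_, rfl⟩
  have h1 : Finsupp.single b 1 - ψ z ∈ LinearMap.ker (Res.d t) := by
    rw [LinearMap.mem_ker, map_sub, hψ', hz0, map_zero, ← hz]
    simp
  rw [Res.exact t] at h1
  obtain ⟨u, hu⟩ := h1
  have h2 := minimal Res (t + 1) u b
  rw [hu] at h2
  have h3 := inM_map ψ (minimal Res t (Finsupp.single b 1)) b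
  rw [← hz] at h3
  simp [h3] at h2

lemma ses_ok {M N P : Type} {R : Type} [CommRing R] [AddCommGroup M] [Module R M]
    [AddCommGroup N] [Module R N] [AddCommGroup P] [Module R P]
    (f : M →ₗ[R] N) (g : N →ₗ[R] P) (h : LinearMap.ker g = LinearMap.range f) :
    Function.Exact (LinearMap.range f).subtype g.rangeRestrict := by
  rw [LinearMap.exact_iff, LinearMap.ker_rangeRestrict, h, Submodule.range_subtype]

lemma PD_down (i : ℕ) : ∀ n, PD (MvPolynomial σ K) I (n + i + 2) →
    PD (MvPolynomial σ K) (LinearMap.range (Res.d i)) (n + 1) := by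
  induction i with
  | zero =>
    intro n h
    refine PD.X1 _ _ (Submodule.subtype_injective _) (ses_ok _ _ Res.exact0)
      (LinearMap.surjective_rangeRestrict _) (PD.of_projective.mono (by omega)) ?_
    rw [Res.epi]
    exact h
  | succ i ih =>
    intro n h
    refine PD.X1 _ _ (Submodule.subtype_injective _) (ses_ok _ _ (Res.exact i))
      (LinearMap.surjective_rangeRestrict _) (PD.of_projective.mono (by omega)) ?_
    exact ih (n + 1) (h.mono (by omega))

lemma PD_up (i : ℕ) : ∀ n, PD (MvPolynomial σ K) (LinearMap.range (Res.d i)) n →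
    PD (MvPolynomial σ K) I (n + i + 1) := by
  induction i with
  | zero =>
    intro n h
    have := PD.X3 _ _ (Submodule.subtype_injective _) (ses_ok _ _ Res.exact0)
      (LinearMap.surjective_rangeRestrict _) h (PD.of_projective.mono (by omega))
    rw [Res.epi] at this
    exact this
  | succ i ih =>
    intro n h
    have := PD.X3 _ _ (Submodule.subtype_injective _) (ses_ok _ _ (Res.exact i))
      (LinearMap.surjective_rangeRestrict _) h (PD.of_projective.mono (by omega))
    exact (ih (n + 1) this).mono (by omega)

lemma empty_of_PD (t : ℕ) (h : PD (MvPolynomial σ K) I (t + 1)) : IsEmpty (Res.B (t + 1)) := by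
  cases t with
  | zero =>
    rw [← Res.epi] at h
    have := PD.projective h
    refine split_empty Res 0 Res.ε.rangeRestrict (LinearMap.surjective_rangeRestrict _) ?_
    rw [LinearMap.ker_rangeRestrict, Res.exact0]
  | succ i =>
    have := PD.projective (PD_down Res i 0 (h.mono (by omega)))
    refine split_empty Res (i + 1) (M := LinearMap.range (Res.d i)) (Res.d i).rangeRestrict
      (LinearMap.surjective_rangeRestrict _) ?_
    rw [LinearMap.ker_rangeRestrict, Res.exact]

lemma PD_of_empty (t : ℕ) (h : IsEmpty (Res.B t)) : PD (MvPolynomial σ K) I t := by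
  cases t with
  | zero =>
    rw [← Res.epi]
    have : Subsingleton (LinearMap.range Res.ε) :=
      (LinearMap.surjective_rangeRestrict Res.ε).subsingleton
    exact PD.of_subsingleton
  | succ i =>
    have : Subsingleton (LinearMap.range (Res.d i)) :=
      (LinearMap.surjective_rangeRestrict (Res.d i)).subsingleton
    exact (PD_up Res i 0 PD.of_subsingleton).mono (by omega)

lemma greatest_of_QQ {k : Type} [AddCommGroup k] [Module (MvPolynomial σ K) k] {N : ℕ}
    (h : QQ k I N) : IsGreatest {t : ℕ | Nonempty (Res.B t)} N := by
  constructor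
  · by_contra hcon
    have h1 : IsEmpty (Res.B N) := not_nonempty_iff.1 hcon
    exact h.2 ((PD_of_empty Res N h1).ez le_rfl)
  · intro t ht
    by_contra hcon
    obtain ⟨s, rfl⟩ : ∃ s, t = s + 1 := ⟨t - 1, by omega⟩
    exact (not_isEmpty_iff.2 ht) (empty_of_PD Res s (h.1.mono (by omega)))

end Resol
end CoLP

/-- the projective dimension of `L(𝔄)` — the largest homological
degree with a nonzero free module in a minimal multigraded free resolution —
equals the maximum of `|K₁| + ⋯ + |Kₘ| − m` over the admissible tuples
`(K₁,…,Kₘ)` (conditions (1),(3),(4) of the construction). -/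
theorem stmt8 (K : Type) [Field K] (m n : ℕ) (r : Fin m → Fin m → Prop)
    (hrefl : ∀ i, r i i) (htrans : ∀ i j k, r i j → r j k → r i k)
    (hcompat : ∀ i j, r i j → i ≤ j)
    (A : Fin m → Finset (Fin n)) (hA : ∀ i, (A i).Nonempty)
    (𝔄 : Set (Fin m → Fin n)) (h𝔄ne : 𝔄.Nonempty)
    (hsub : ∀ f ∈ 𝔄, (∀ i, f i ∈ A i) ∧ (∀ i j, r i j → f i ≤ f j))
    (hdown : ∀ f ∈ 𝔄, ∀ g : Fin m → Fin n, (∀ i, g i ∈ A i) →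
      (∀ i j, r i j → g i ≤ g j) → (∀ i, g i ≤ f i) → g ∈ 𝔄)
    (Res : MinMGFreeRes K (Fin m × Fin n)
      (Ideal.span ((fun f : Fin m → Fin n =>
        ∏ i : Fin m, (X (i, f i) : MvPolynomial (Fin m × Fin n) K)) '' 𝔄))) :
    sSup {t : ℕ | Nonempty (Res.B t)} =
      sSup {t : ℕ | ∃ Kf : Fin m → Finset (Fin n),
        (∀ i, Kf i ⊆ A i) ∧ (∀ i, (Kf i).Nonempty) ∧
        (∀ i j, r i j → i ≠ j → ∀ a ∈ Kf i, ∀ b ∈ Kf j, a ≤ b) ∧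
        (∃ g ∈ 𝔄, ∀ i, g i ∈ Kf i ∧ ∀ a ∈ Kf i, a ≤ g i) ∧
        (∑ i, (Kf i).card) = m + t} := by
  classical
  let kk := MvPolynomial (Fin m × Fin n) K ⧸
    RingHom.ker (constantCoeff : MvPolynomial (Fin m × Fin n) K →+* K)
  have hnt : Nontrivial kk := Ideal.Quotient.nontrivial_iff.2 (RingHom.ker_ne_top _)
  have hk : ∀ (v : Fin m × Fin n) (z : kk), (X v : MvPolynomial (Fin m × Fin n) K) • z = 0 := by
    intro v z
    obtain ⟨p, rfl⟩ := Ideal.Quotient.mk_surjective z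
    rw [← Ideal.Quotient.mk_eq_mk, ← Submodule.Quotient.mk_smul, Submodule.Quotient.mk_eq_zero]
    simp [RingHom.mem_ker]
  have hgood : CoLP.Good 𝔄 := by
    intro f hf g hg i hag hlt
    refine hdown f hf _ ?_ ?_ ?_
    · intro j
      by_cases hj : j = i
      · subst hj; simpa using (hsub g hg).1 j
      · simpa [hj] using (hsub f hf).1 j
    · intro p q hpq
      by_cases hp : p = i
      · subst hp
        by_cases hq : q = p
        · subst hq; simp
        · simp only [Function.update_self, Function.update_of_ne hq]
          exact hlt.le.trans ((hsub f hf).2 _ _ hpq)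
      · by_cases hq : q = i
        · subst hq
          simp only [Function.update_self, Function.update_of_ne hp]
          rw [hag p (lt_of_le_of_ne (hcompat _ _ hpq) hp)]
          exact (hsub g hg).2 _ _ hpq
        · simp only [Function.update_of_ne hq, Function.update_of_ne hp]
          exact (hsub f hf).2 _ _ hpq
    · intro j
      by_cases hj : j = i
      · subst hj; simpa using hlt.le
      · simp [hj]
  obtain ⟨N, hN, hQ⟩ := CoLP.main_rec (K := K) (k := kk) hk n m (fun i a => (i, a))
    (by intro i j a b h; simpa using h) 𝔄 h𝔄ne hgood
  have hI : CoLP.mI K (CoLP.expo (fun i a => (i, a)) '' 𝔄) =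
      Ideal.span ((fun f : Fin m → Fin n =>
        ∏ i : Fin m, (X (i, f i) : MvPolynomial (Fin m × Fin n) K)) '' 𝔄) := by
    unfold CoLP.mI
    rw [Set.image_image]
    congr 1
    apply Set.image_congr
    intro f _
    simp only [CoLP.expo, X]
    rw [monomial_sum_one]
  rw [hI] at hQ
  rw [(CoLP.greatest_of_QQ Res hQ).csSup_eq]
  have hT : {t : ℕ | ∃ Kf : Fin m → Finset (Fin n),
        (∀ i, Kf i ⊆ A i) ∧ (∀ i, (Kf i).Nonempty) ∧
        (∀ i j, r i j → i ≠ j → ∀ a ∈ Kf i, ∀ b ∈ Kf j, a ≤ b) ∧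
        (∃ g ∈ 𝔄, ∀ i, g i ∈ Kf i ∧ ∀ a ∈ Kf i, a ≤ g i) ∧
        (∑ i, (Kf i).card) = m + t} = CoLP.TT 𝔄 := by
    ext t
    constructor
    · rintro ⟨Kf, h1, h2, h3, ⟨g, hg, hg2⟩, h5⟩
      refine ⟨Kf, h2, ?_, h5⟩
      intro f hf
      refine hdown g hg f (fun i => h1 i (hf i)) ?_ (fun i => (hg2 i).2 _ (hf i))
      intro i j hij
      by_cases h : i = j
      · rw [h]
      · exact h3 i j hij h _ (hf i) _ (hf j)
    · rintro ⟨Kf, h2, h3, h5⟩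
      choose c hc using h2
      refine ⟨Kf, ?_, fun i => ⟨c i, hc i⟩, ?_, ?_, h5⟩
      · intro i a ha
        have := (hsub _ (h3 (Function.update c i a) (fun j => by
          by_cases hj : j = i
          · subst hj; simpa using ha
          · simpa [hj] using hc j))).1 i
        simpa using this
      · intro i j hij hne a ha b hb
        have := (hsub _ (h3 (Function.update (Function.update c i a) j b) (fun l => by
          by_cases hj : l = j
          · subst hj; simpa using hb
          · by_cases hl : l = i
            · subst hl; simpa [hj] using ha
            · simpa [hj, hl] using hc l))).2 i j hij
        simpa [hne] using this
      · have hn : ∀ i, (Kf i).Nonempty := fun i => ⟨c i, hc i⟩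
        exact ⟨fun i => (Kf i).max' (hn i), h3 _ (fun i => (Kf i).max'_mem _),
          fun i => ⟨(Kf i).max'_mem _, fun a ha => (Kf i).le_max' a ha⟩⟩
  rw [hT, hN.csSup_eq]
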